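/- Let G be a one-sided complete-observation turn-based stochastic game satisfying interaction separation with uniform-n-ary probabilistic states (as in the context), let f : A₁ → ZMod n and g : A₂ → ZMod n be surjective, and let (G', φ') be the derandomized game and objective obtained from (G, φ). Then for every measurable objective φ ⊆ S^ω and every state s ∈ S, val^G(φ)(s) = val^{G'}(φ')(s); moreover player 1 has an observation-based optimal strategy for φ from s in G if and only if player 1 has an observation-based optimal strategy for φ' from s in G'. -/

import Mathlib

open MeasureTheory
open scoped ENNReal

namespace Stmt5

/-- Type of a state: player-1 state, player-2 state, or probabilistic state. -/
inductive Turn : Type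
  | p1 : Turn
  | p2 : Turn
  | prob : Turn
deriving DecidableEq

variable {S A₁ A₂ O : Type}

/-- The cylinder set of infinite plays extending the finite prefix `l`. -/
def Cyl {α : Type} (l : List α) : Set (ℕ → α) := {ρ | ∀ i : Fin l.length, ρ i.1 = l.get i}

/-- Probability of observing the successive states `rest` after the history `hist ++ [cur]`,
given the one-step transition probability `step`. -/
noncomputable def listProb {α : Type} (step : List α → α → α → ℝ≥0∞) :
    List α → α → List α → ℝ≥0∞
  | _, _, [] => 1
  | hist, cur, s' :: rest => step hist cur s' * listProb step (hist ++ [cur]) s' rest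

/-- One-step transition probability of the turn-based game `G`: at player-1 states the
action of player 1 (drawn from `σ`) determines the successor via `δ₁`, at player-2 states
the action of player 2 (drawn from `π`) determines it via `δ₂`, and at probabilistic
states with successor tuple `succ cur : ZMod n → S` each successor is reached with
probability `#{k | succ cur k = next}/n` (independently of the actions). -/
noncomputable def stepG [DecidableEq S] [Fintype A₁] [Fintype A₂] (n : ℕ) [NeZero n]
    (turn : S → Turn) (δ₁ : S → A₁ → S) (δ₂ : S → A₂ → S) (succ : S → ZMod n → S)
    (σ : List S → PMF A₁) (π : List S → PMF A₂)
    (hist : List S) (cur next : S) : ℝ≥0∞ :=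
  match turn cur with
  | Turn.p1 => ∑' a, σ (hist ++ [cur]) a * (if δ₁ cur a = next then 1 else 0)
  | Turn.p2 => ∑' b, π (hist ++ [cur]) b * (if δ₂ cur b = next then 1 else 0)
  | Turn.prob =>
      ((Finset.univ.filter fun k : ZMod n => succ cur k = next).card : ℝ≥0∞) / (n : ℝ≥0∞)

/-- `Pr` is the family of Ionescu–Tulcea play measures of the game with one-step
transition probabilities `step σ π`. -/
def IsPlayMeasure {α : Type} [MeasurableSpace α]
    (step : (List α → PMF A₁) → (List α → PMF A₂) → List α → α → α → ℝ≥0∞)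
    (Pr : α → (List α → PMF A₁) → (List α → PMF A₂) → Measure (ℕ → α)) : Prop :=
  (∀ s σ π, IsProbabilityMeasure (Pr s σ π)) ∧
    ∀ s σ π (l : List α), Pr s σ π (Cyl (s :: l)) = listProb (step σ π) [] s l

/-- An observation-based strategy only depends on the observation sequence. -/
def ObsBased {α A O : Type} (obs : α → O) (σ : List α → PMF A) : Prop :=
  ∀ h h' : List α, h.map obs = h'.map obs → σ h = σ h'

/-- State space of the derandomized game `G'`. -/
abbrev S' (S : Type) (n : ℕ) : Type := S ⊕ S × ZMod n

/-- Turn function of `G'`: probabilistic states of `G` become player-2 states, and the new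
states `(s, i)` are player-1 states. -/
def turn' (turn : S → Turn) {n : ℕ} : S' S n → Turn
  | Sum.inl s => match turn s with
    | Turn.prob => Turn.p2
    | t => t
  | Sum.inr _ => Turn.p1

/-- Player-1 transitions of `G'`: unchanged on `S₁`; from `(s, i)` the action `a` leads to
the entry of the successor tuple of `s` at index `i + f a`. -/
def delta₁' (δ₁ : S → A₁ → S) {n : ℕ} (succ : S → ZMod n → S) (f : A₁ → ZMod n) :
    S' S n → A₁ → S' S n
  | Sum.inl s, a => Sum.inl (δ₁ s a)
  | Sum.inr (s, i), a => Sum.inl (succ s (i + f a))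

/-- Player-2 transitions of `G'`: unchanged on `S₂`; from a probabilistic state `s` of `G`
the action `b` leads to `(s, g b)`. -/
def delta₂' [DecidableEq Turn] (turn : S → Turn) (δ₂ : S → A₂ → S) {n : ℕ}
    (g : A₂ → ZMod n) : S' S n → A₂ → S' S n
  | Sum.inl s, b => if turn s = Turn.prob then Sum.inr (s, g b) else Sum.inl (δ₂ s b)
  | Sum.inr (s, i), _ => Sum.inr (s, i)

/-- One-step transition probability of the (deterministic) derandomized game `G'`. -/
noncomputable def stepG' [DecidableEq S] [Fintype A₁] [Fintype A₂] (n : ℕ) [NeZero n]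
    (turn : S → Turn) (δ₁ : S → A₁ → S) (δ₂ : S → A₂ → S) (succ : S → ZMod n → S)
    (f : A₁ → ZMod n) (g : A₂ → ZMod n)
    (σ : List (S' S n) → PMF A₁) (π : List (S' S n) → PMF A₂)
    (hist : List (S' S n)) (cur next : S' S n) : ℝ≥0∞ :=
  match turn' turn cur with
  | Turn.p1 => ∑' a, σ (hist ++ [cur]) a *
      (if delta₁' δ₁ succ f cur a = next then 1 else 0)
  | Turn.p2 => ∑' b, π (hist ++ [cur]) b *
      (if delta₂' turn δ₂ g cur b = next then 1 else 0)
  | Turn.prob => 0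

/-- Projection of `G'`-states to `G`-states. -/
def unbar {n : ℕ} : S' S n → S
  | Sum.inl s => s
  | Sum.inr (s, _) => s

/-- Observation map of `G'`: `(s, i)` is observed like `s`. -/
def obs' (obs₁ : S → O) {n : ℕ} : S' S n → O := fun s => obs₁ (unbar s)

/-- The derandomized objective `φ'`: the subsequence of states in `S` (i.e. not in
`S_P × ZMod n`) is infinite and belongs to `φ`. -/
def phi' {n : ℕ} (φ : Set (ℕ → S)) : Set (ℕ → S' S n) :=
  {ρ | {m | (ρ m).isLeft = true}.Infinite ∧
    (fun k => unbar (ρ (Nat.nth (fun m => (ρ m).isLeft = true) k))) ∈ φ}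

/-!
Players and chance alternate in `G`, so the positions of the states of `G` in a play of `G'` are
known in advance, and with them which of these states are probabilistic. This lets strategies be
translated in both directions between the two games.

At a probabilistic state, player 2 contributes `g b`, player 1 contributes `f a` without having
observed `g b`, and the successor is picked by the sum. The sum is a one-time pad: if one of the two
independent summands is uniform, so is the sum, and the probabilistic move of `G` is reproduced.
Hence either player can enforce it alone.

When player 2 translates a strategy, this gives the equality of play laws at once. When player 1
does, the opponent may play any `π'`, whose actions can depend on the numbers `g b` revealed to
player 2 only. As player 1 reacts only to observations of the collapsed play, `π'` can be replaced
by its conditional average over all plays with a given collapse; this average is a strategy in `G`,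
and against it the play of `G` has the law of the collapsed play of `G'`.
-/

section Pad

variable {α β γ : Type*}

theorem tsum_mul_ite_eq_map_apply [DecidableEq β] (p : PMF α) (F : α → β) (y : β) :
    ∑' a, p a * (if F a = y then 1 else 0) = p.map F y := by
  rw [PMF.map_apply]
  exact tsum_congr fun a ↦ by simp only [mul_ite, mul_one, mul_zero, eq_comm (a := y)]

theorem pmf_map_comp_apply_of_injective (p : PMF α) (F : α → β) {ι : β → γ}
    (hι : Function.Injective ι) (y : β) : p.map (ι ∘ F) (ι y) = p.map F y := by
  classical
  simp only [← tsum_mul_ite_eq_map_apply, Function.comp_apply, hι.eq_iff]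

theorem uniformOfFintype_map_equiv [Fintype α] [Nonempty α] (e : α ≃ α) :
    (PMF.uniformOfFintype α).map e = PMF.uniformOfFintype α := by
  classical
  ext y
  rw [PMF.map_apply, tsum_eq_single (e.symm y)]
  · simp
  · exact fun a ha ↦ if_neg fun h ↦ ha (by simp [h])

theorem uniformOfFintype_map_apply [Fintype α] [Nonempty α] [DecidableEq β] (F : α → β) (y : β) :
    (PMF.uniformOfFintype α).map F y =
      ((Finset.univ.filter fun a ↦ F a = y).card : ℝ≥0∞) / Fintype.card α := by
  simp only [← tsum_mul_ite_eq_map_apply, PMF.uniformOfFintype_apply, tsum_fintype,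
    ← Finset.mul_sum, Finset.sum_boole, ENNReal.div_eq_inv_mul]

theorem bind_map_add_eq_uniform {G : Type*} [AddGroup G] [Fintype G] {p q : PMF G}
    (h : p = PMF.uniformOfFintype G ∨ q = PMF.uniformOfFintype G) :
    (p.bind fun i ↦ q.map (i + ·)) = PMF.uniformOfFintype G := by
  rcases h with rfl | rfl
  · calc ((PMF.uniformOfFintype G).bind fun i ↦ q.map (i + ·))
        = q.bind fun k ↦ (PMF.uniformOfFintype G).map (Equiv.addRight k) :=
          PMF.bind_comm _ _ _
      _ = PMF.uniformOfFintype G := by simp only [uniformOfFintype_map_equiv, PMF.bind_const]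
  · have shift (i : G) : (PMF.uniformOfFintype G).map (i + ·) = PMF.uniformOfFintype G :=
      uniformOfFintype_map_equiv (Equiv.addLeft i)
    simp only [shift, PMF.bind_const]

theorem tsum_mul_map_add_eq_map_uniform {G : Type*} [AddGroup G] [Fintype G] {p : PMF G}
    {q : PMF α} {F : α → G} (h : p = PMF.uniformOfFintype G ∨ q.map F = PMF.uniformOfFintype G)
    (w : G → β) (y : β) :
    ∑' i, p i * q.map (fun a ↦ w (i + F a)) y = (PMF.uniformOfFintype G).map w y := by
  simp only [← bind_map_add_eq_uniform h, PMF.map_bind, PMF.map_comp, PMF.bind_apply]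
  rfl

theorem exists_pmf_map_eq_uniform [Fintype β] [Nonempty β] {F : α → β}
    (hF : Function.Surjective F) : ∃ p : PMF α, p.map F = PMF.uniformOfFintype β :=
  ⟨(PMF.uniformOfFintype β).map (Function.surjInv hF), by
    rw [PMF.map_comp, (Function.rightInverse_surjInv hF).comp_eq_id, PMF.map_id]⟩

end Pad

section MeanPMF

variable {Ω A : Type*} [MeasurableSpace Ω] {μ : Measure Ω} {E : Set Ω} {κ : Ω → PMF A}

/-- `q` is the average over the event `E` of the random distribution `κ`, that is, the law of an
action drawn from `κ`, conditionally on `E`. The defining equation is multiplied by `μ E`, so that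
every `q` is an average over a null event. -/
def IsMeanPMF (μ : Measure Ω) (E : Set Ω) (κ : Ω → PMF A) (q : PMF A) : Prop :=
  ∀ a, ∫⁻ x in E, κ x a ∂μ = μ E * q a

theorem IsMeanPMF.of_ae_eq {q : PMF A} (hE : MeasurableSet E)
    (h : ∀ᵐ x ∂μ, x ∈ E → κ x = q) : IsMeanPMF μ E κ q := fun a ↦ by
  rw [setLIntegral_congr_fun_ae (g := fun _ ↦ q a) hE (h.mono fun x hx hxE ↦ by rw [hx hxE]),
    setLIntegral_const, mul_comm]

theorem IsMeanPMF.lintegral_map_apply {B : Type*} [Countable A] {q : PMF A}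
    (h : IsMeanPMF μ E κ q) (hκ : ∀ a, Measurable fun x ↦ κ x a) (F : A → B) (y : B) :
    ∫⁻ x in E, (κ x).map F y ∂μ = μ E * q.map F y := by
  classical
  simp only [← tsum_mul_ite_eq_map_apply]
  rw [lintegral_tsum fun a ↦ ((hκ a).mul_const _).aemeasurable, ← ENNReal.tsum_mul_left]
  refine tsum_congr fun a ↦ ?_
  rw [lintegral_mul_const _ (hκ a), h a, mul_assoc]

theorem exists_isMeanPMF [Countable A] [IsFiniteMeasure μ] [Nonempty Ω]
    (hκ : ∀ a, Measurable fun x ↦ κ x a) (E : Set Ω) : ∃ q, IsMeanPMF μ E κ q := by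
  by_cases hE : μ E = 0
  · exact ⟨κ (Classical.arbitrary Ω), fun a ↦ by
      rw [hE, zero_mul, setLIntegral_measure_zero _ _ hE]⟩
  · have hE' : μ E ≠ ∞ := measure_ne_top _ _
    have total : ∑' a, (μ E)⁻¹ * ∫⁻ x in E, κ x a ∂μ = 1 := by
      rw [ENNReal.tsum_mul_left, ← lintegral_tsum fun a ↦ (hκ a).aemeasurable]
      simp only [PMF.tsum_coe, setLIntegral_one, ENNReal.inv_mul_cancel hE hE']
    refine ⟨⟨_, total ▸ ENNReal.summable.hasSum⟩, fun a ↦ ?_⟩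
    change _ = μ E * ((μ E)⁻¹ * _)
    rw [← mul_assoc, ENNReal.mul_inv_cancel hE hE', one_mul]

end MeanPMF

section Cylinder

theorem measurable_of_dependsOn {ι α β : Type*} [Countable α] [MeasurableSpace α]
    [MeasurableSingletonClass α] [MeasurableSpace β] {f : (ι → α) → β} {s : Set ι}
    (hs : s.Finite) (hf : DependsOn f s) : Measurable f := by
  have : Finite s := hs
  rcases isEmpty_or_nonempty β with _ | _
  · exact fun B _ ↦ by simp [Set.eq_empty_of_isEmpty B]
  · obtain ⟨g, rfl⟩ := dependsOn_iff_exists_comp.1 hf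
    exact (measurable_of_countable g).comp
      (measurable_pi_lambda _ fun i ↦ measurable_pi_apply (i : ι))

variable {α : Type*} [Countable α] [MeasurableSpace α] [MeasurableSingletonClass α] {m : ℕ}
  {E : Set (ℕ → α)}

theorem measurableSet_of_dependsOn (hE : DependsOn (· ∈ E) (Set.Iio m)) : MeasurableSet E :=
  measurableSet_setOfPred.2 (measurable_of_dependsOn (Set.finite_Iio m) hE)

theorem dependsOn_mem_cylinder {α : Type*} (x : ℕ → α) (m : ℕ) :
    DependsOn (· ∈ PiNat.cylinder x m) (Set.Iio m) := fun y z h ↦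
  propext <| forall₂_congr fun i hi ↦ by rw [h i hi]

theorem measure_eq_of_forall_cylinder_eq {μ ν : Measure (ℕ → α)}
    (h : ∀ x, μ (PiNat.cylinder x m) = ν (PiNat.cylinder x m))
    (hE : DependsOn (· ∈ E) (Set.Iio m)) : μ E = ν E := by
  set r : (ℕ → α) → (Set.Iio m → α) := (Set.Iio m).domRestrict
  have hr : Measurable r := measurable_pi_lambda _ fun i ↦ measurable_pi_apply (i : ℕ)
  have r_fiber (x) : r ⁻¹' {r x} = PiNat.cylinder x m := by
    ext y
    simp [r, funext_iff, PiNat.mem_cylinder_iff]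
  have map_eq : μ.map r = ν.map r := by
    refine Measure.ext_of_singleton fun w ↦ ?_
    rw [Measure.map_apply hr (measurableSet_singleton w),
      Measure.map_apply hr (measurableSet_singleton w)]
    rcases (r ⁻¹' {w}).eq_empty_or_nonempty with hw | ⟨x, rfl⟩
    · simp [hw]
    · rw [r_fiber, h]
  have E_eq : r ⁻¹' (r '' E) = E := by
    refine (Set.subset_preimage_image r E).antisymm' ?_
    rintro y ⟨x, hx, hxy⟩
    exact (hE fun i hi ↦ congrFun hxy ⟨i, hi⟩).mp hx
  have image_meas : MeasurableSet (r '' E) := (Set.to_countable _).measurableSet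
  rw [← E_eq, ← Measure.map_apply hr image_meas, map_eq, Measure.map_apply hr image_meas]

theorem measure_ext_of_cylinder {μ ν : Measure (ℕ → α)} [IsFiniteMeasure μ]
    (h : ∀ m x, μ (PiNat.cylinder x m) = ν (PiNat.cylinder x m)) : μ = ν := by
  refine ext_of_generate_finite _ generateFrom_measurableCylinders.symm
    isPiSystem_measurableCylinders (fun B hB ↦ ?_)
    (measure_eq_of_forall_cylinder_eq (h 0) fun _ _ _ ↦ rfl)
  obtain ⟨I, T, -, rfl⟩ := (mem_measurableCylinders _).1 hB
  refine measure_eq_of_forall_cylinder_eq (h (I.sup id + 1)) fun x y hxy ↦ ?_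
  have : I.restrict x = I.restrict y :=
    funext fun i ↦ hxy i (Nat.lt_succ_of_le (Finset.le_sup (f := id) i.2))
  simp only [mem_cylinder, this]

end Cylinder

section History

variable {α β : Type*} {x y : ℕ → α} {m : ℕ}

/-- The list `[x 0, …, x (m - 1)]` of the first `m` states of the play `x`. -/
def history (x : ℕ → α) (m : ℕ) : List α := (List.range m).map x

theorem length_history : (history x m).length = m := by simp [history]

theorem history_succ : history x (m + 1) = history x m ++ [x m] := by
  simp [history, List.range_succ]

theorem history_succ_eq_cons : history x (m + 1) = x 0 :: history (fun i ↦ x (i + 1)) m := by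
  simp [history, List.range_succ_eq_map, Function.comp_def]

theorem history_congr (h : ∀ i < m, x i = y i) : history x m = history y m :=
  List.map_congr_left fun i hi ↦ h i (List.mem_range.1 hi)

theorem getD_history {i : ℕ} (d : α) (hi : i < m) : (history x m).getD i d = x i := by
  simp [history, List.getD_eq_getElem?_getD, hi]

theorem map_history (F : α → β) : (history x m).map F = history (fun i ↦ F (x i)) m := by
  simp [history, Function.comp_def]

theorem Cyl_history {α : Type} {x : ℕ → α} : Cyl (history x m) = PiNat.cylinder x m := by
  ext y
  simp [Cyl, PiNat.mem_cylinder_iff, Fin.forall_iff, history]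

theorem dependsOn_history (F : List α → β) (m : ℕ) :
    DependsOn (fun x : ℕ → α ↦ F (history x m)) (Set.Iio m) := fun _ _ h ↦
  congrArg F (history_congr h)

theorem cylinder_update_succ (x : ℕ → α) (m : ℕ) (t : α) :
    PiNat.cylinder (Function.update x m t) (m + 1) = PiNat.cylinder x m ∩ {y | y m = t} := by
  ext y
  simp only [PiNat.mem_cylinder_iff, Nat.lt_succ_iff_lt_or_eq, Set.mem_inter_iff,
    Set.mem_ofPred_eq]
  grind

end History

section PlayLaw

variable {α : Type*} [MeasurableSpace α]

/-- `μ` is the law of a play which starts at `s` and moves from the state `c`, reached after the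
history `h`, to the state `t` with probability `step h c t`. -/
structure IsPlayLaw (step : List α → α → α → ℝ≥0∞) (s : α) (μ : Measure (ℕ → α)) : Prop where
  isProbabilityMeasure : IsProbabilityMeasure μ
  ae_zero : ∀ᵐ x ∂μ, x 0 = s
  cylinder_succ (x : ℕ → α) (m : ℕ) : μ (PiNat.cylinder x (m + 2)) =
    μ (PiNat.cylinder x (m + 1)) * step (history x m) (x m) (x (m + 1))

theorem listProb_append_singleton {α : Type} (step : List α → α → α → ℝ≥0∞) {l h' : List α}
    {s c : α} (hl : s :: l = h' ++ [c]) (h : List α) (t : α) :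
    listProb step h s (l ++ [t]) = listProb step h s l * step (h ++ h') c t := by
  induction l generalizing s h h' with
  | nil =>
    obtain ⟨rfl, rfl⟩ : h' = [] ∧ c = s := by
      simpa [List.append_eq_singleton_iff] using hl.symm
    simp [listProb]
  | cons u l ih =>
    obtain _ | ⟨_, h'⟩ := h'
    · simp at hl
    · obtain ⟨rfl, tail_eq⟩ := List.cons_eq_cons.1 hl
      simp only [List.cons_append, listProb, ih tail_eq, mul_assoc, List.append_assoc,
        List.nil_append]

theorem IsPlayMeasure.isPlayLaw {α A₁ A₂ : Type} [MeasurableSpace α] [MeasurableSingletonClass α]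
    {step : (List α → PMF A₁) → (List α → PMF A₂) → List α → α → α → ℝ≥0∞}
    {Pr : α → (List α → PMF A₁) → (List α → PMF A₂) → Measure (ℕ → α)}
    (hPr : IsPlayMeasure step Pr) (s : α) (σ : List α → PMF A₁) (π : List α → PMF A₂) :
    IsPlayLaw (step σ π) s (Pr s σ π) := by
  have := hPr.1 s σ π
  have ae_zero : ∀ᵐ x ∂Pr s σ π, x 0 = s := by
    have start_eq : {x : ℕ → α | x 0 = s} = Cyl [s] := by ext x; simp [Cyl]
    have start_meas : MeasurableSet {x : ℕ → α | x 0 = s} :=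
      (measurable_pi_apply (0 : ℕ) : Measurable fun x : ℕ → α ↦ x 0) (measurableSet_singleton s)
    exact (mem_ae_iff_prob_eq_one start_meas).2 (by rw [start_eq, hPr.2]; rfl)
  refine ⟨this, ae_zero, fun x m ↦ ?_⟩
  by_cases hx : x 0 = s
  · subst hx
    rw [← Cyl_history, ← Cyl_history, history_succ_eq_cons, history_succ, history_succ_eq_cons,
      hPr.2, hPr.2, listProb_append_singleton _ (history_succ_eq_cons.symm.trans history_succ)]
    rfl
  · have null (k : ℕ) : Pr s σ π (PiNat.cylinder x (k + 1)) = 0 :=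
      measure_mono_null (fun y hy hy0 ↦ hx ((hy 0 k.succ_pos).symm.trans hy0)) ae_zero
    rw [null, null, zero_mul]

namespace IsPlayLaw

variable {step : List α → α → α → ℝ≥0∞} {s : α} {μ ν : Measure (ℕ → α)}

open Classical in
theorem measure_cylinder_one (hμ : IsPlayLaw step s μ) (x : ℕ → α) :
    μ (PiNat.cylinder x 1) = if x 0 = s then 1 else 0 := by
  have := hμ.isProbabilityMeasure
  have cylinder_ae_eq : PiNat.cylinder x 1 =ᵐ[μ] {_y | x 0 = s} :=
    hμ.ae_zero.mono fun y hy ↦ propext <| by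
      change y ∈ PiNat.cylinder x 1 ↔ x 0 = s
      simp [PiNat.mem_cylinder_iff, ← hy, eq_comm]
  rw [measure_congr cylinder_ae_eq]
  split_ifs with hx <;> simp [hx]

variable [Countable α] [MeasurableSingletonClass α]

theorem unique (hμ : IsPlayLaw step s μ) (hν : IsPlayLaw step s ν) : μ = ν := by
  have := hμ.isProbabilityMeasure
  have := hν.isProbabilityMeasure
  refine measure_ext_of_cylinder fun m x ↦ ?_
  induction m with
  | zero => simp
  | succ m ih =>
    cases m with
    | zero => rw [zero_add, hμ.measure_cylinder_one, hν.measure_cylinder_one]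
    | succ m => rw [hμ.cylinder_succ, hν.cylinder_succ, ih]

theorem measure_inter_eq_setLIntegral (hμ : IsPlayLaw step s μ) {m : ℕ} {E : Set (ℕ → α)}
    (hE : DependsOn (· ∈ E) (Set.Iio (m + 1))) (t : α) :
    μ (E ∩ {x | x (m + 1) = t}) = ∫⁻ x in E, step (history x m) (x m) t ∂μ := by
  have E_meas := measurableSet_of_dependsOn hE
  rw [← Measure.restrict_apply E_meas, ← withDensity_apply _ E_meas]
  refine measure_eq_of_forall_cylinder_eq (fun x ↦ ?_) hE
  have cyl_meas := measurableSet_of_dependsOn (dependsOn_mem_cylinder x (m + 1))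
  have step_congr {y z : ℕ → α} (h : y ∈ PiNat.cylinder z (m + 1)) :
      step (history y m) (y m) t = step (history z m) (z m) t := by
    rw [history_congr fun i hi ↦ h i (by lia), h m (by lia)]
  have update_mem := PiNat.update_mem_cylinder x (m + 1) t
  have step_update := hμ.cylinder_succ (Function.update x (m + 1) t) m
  rw [cylinder_update_succ, PiNat.mem_cylinder_iff_eq.1 update_mem, Function.update_self,
    step_congr update_mem] at step_update
  rw [Measure.restrict_apply cyl_meas, withDensity_apply _ cyl_meas, step_update,
    setLIntegral_congr_fun cyl_meas fun y hy ↦ step_congr hy, setLIntegral_const, mul_comm]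

theorem ae_step_ne_zero (hμ : IsPlayLaw step s μ) :
    ∀ᵐ x ∂μ, ∀ m, step (history x m) (x m) (x (m + 1)) ≠ 0 := by
  refine ae_all_iff.2 fun m ↦ ?_
  have ne_zero_of_eq (t : α) : ∀ᵐ x ∂μ, x (m + 1) = t → step (history x m) (x m) t ≠ 0 := by
    set E : Set (ℕ → α) := {x | step (history x m) (x m) t = 0}
    have hE : DependsOn (· ∈ E) (Set.Iio (m + 1)) := fun y z h ↦ by
      have hist : history y m = history z m := history_congr fun i hi ↦ h i (Nat.lt_succ_of_lt hi)
      simp only [E, Set.mem_ofPred_eq, h m (Set.mem_Iio.2 m.lt_succ_self), hist]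
    have null : μ (E ∩ {x | x (m + 1) = t}) = 0 := by
      rw [hμ.measure_inter_eq_setLIntegral hE,
        setLIntegral_congr_fun (measurableSet_of_dependsOn hE) fun x hx ↦ hx, lintegral_zero]
    exact (measure_eq_zero_iff_ae_notMem.1 null).mono fun x hx ht h0 ↦ hx ⟨h0, ht⟩
  exact (ae_all_iff.2 ne_zero_of_eq).mono fun x hx ↦ hx _ rfl

theorem measure_inter_eq_mul_map {A : Type*} [Countable A] (hμ : IsPlayLaw step s μ) {m : ℕ}
    {E : Set (ℕ → α)} (hE : DependsOn (· ∈ E) (Set.Iio (m + 1))) {κ : List α → PMF A} {q : PMF A}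
    (hq : IsMeanPMF μ E (fun x ↦ κ (history x (m + 1))) q) {F : A → α}
    (hstep : ∀ᵐ x ∂μ, x ∈ E →
      ∀ t, step (history x m) (x m) t = (κ (history x (m + 1))).map F t) (t : α) :
    μ (E ∩ {x | x (m + 1) = t}) = μ E * q.map F t := by
  have κ_meas (a : A) : Measurable fun x : ℕ → α ↦ κ (history x (m + 1)) a :=
    measurable_of_dependsOn (Set.finite_Iio _) (dependsOn_history (κ · a) _)
  rw [hμ.measure_inter_eq_setLIntegral hE, ← hq.lintegral_map_apply κ_meas]
  exact setLIntegral_congr_fun_ae (measurableSet_of_dependsOn hE)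
    (hstep.mono fun x hx hxE ↦ hx hxE t)

end IsPlayLaw

end PlayLaw

section Step

instance instMeasurableSingletonClassSum {α β : Type*} [MeasurableSpace α] [MeasurableSpace β]
    [MeasurableSingletonClass α] [MeasurableSingletonClass β] :
    MeasurableSingletonClass (α ⊕ β) where
  measurableSet_singleton
    | .inl x => by
      rw [← Set.image_singleton]
      exact (measurableSet_singleton x).inl_image
    | .inr x => by
      rw [← Set.image_singleton]
      exact measurableSet_inr_image.2 (measurableSet_singleton x)

/-- Interaction separation: the moves of the players lead to probabilistic states, and the
successors of probabilistic states belong to the players. -/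
structure InteractionSeparated {n : ℕ} (turn : S → Turn) (δ₁ : S → A₁ → S) (δ₂ : S → A₂ → S)
    (succ : S → ZMod n → S) : Prop where
  turn_δ₁ (t : S) (a : A₁) : turn t = .p1 → turn (δ₁ t a) = .prob
  turn_δ₂ (t : S) (c : A₂) : turn t = .p2 → turn (δ₂ t c) = .prob
  turn_succ (t : S) (k : ZMod n) : turn t = .prob → turn (succ t k) ≠ .prob

variable [DecidableEq S] [Fintype A₁] [Fintype A₂] {n : ℕ} [NeZero n] {turn : S → Turn}
  {δ₁ : S → A₁ → S} {δ₂ : S → A₂ → S} {succ : S → ZMod n → S} {f : A₁ → ZMod n} {g : A₂ → ZMod n}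

section Original

variable {σ : List S → PMF A₁} {π : List S → PMF A₂} {h : List S} {t u : S}

theorem stepG_of_turn_eq_p1 (ht : turn t = .p1) :
    stepG n turn δ₁ δ₂ succ σ π h t u = (σ (h ++ [t])).map (δ₁ t) u := by
  simp only [stepG, ht, tsum_mul_ite_eq_map_apply]

theorem stepG_of_turn_eq_p2 (ht : turn t = .p2) :
    stepG n turn δ₁ δ₂ succ σ π h t u = (π (h ++ [t])).map (δ₂ t) u := by
  simp only [stepG, ht, tsum_mul_ite_eq_map_apply]

theorem stepG_of_turn_eq_prob (ht : turn t = .prob) :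
    stepG n turn δ₁ δ₂ succ σ π h t u = (PMF.uniformOfFintype (ZMod n)).map (succ t) u := by
  simp only [stepG, ht, uniformOfFintype_map_apply, ZMod.card]

end Original

section Derandomized

variable {σ : List (S' S n) → PMF A₁} {π : List (S' S n) → PMF A₂} {h : List (S' S n)} {t : S}
  {i : ZMod n} {y : S' S n}

theorem stepG'_of_turn_eq_p1 (ht : turn t = .p1) :
    stepG' n turn δ₁ δ₂ succ f g σ π h (.inl t) y =
      (σ (h ++ [.inl t])).map (.inl ∘ δ₁ t) y := by
  simp only [stepG', turn', ht, tsum_mul_ite_eq_map_apply]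
  rfl

theorem stepG'_of_turn_eq_p2 (ht : turn t = .p2) :
    stepG' n turn δ₁ δ₂ succ f g σ π h (.inl t) y =
      (π (h ++ [.inl t])).map (.inl ∘ δ₂ t) y := by
  simp only [stepG', turn', ht, delta₂', reduceCtorEq, if_false, tsum_mul_ite_eq_map_apply]
  rfl

theorem stepG'_of_turn_eq_prob (ht : turn t = .prob) :
    stepG' n turn δ₁ δ₂ succ f g σ π h (.inl t) y =
      (π (h ++ [.inl t])).map (fun c ↦ .inr (t, g c)) y := by
  simp only [stepG', turn', ht, delta₂', if_true, tsum_mul_ite_eq_map_apply]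

theorem stepG'_inr :
    stepG' n turn δ₁ δ₂ succ f g σ π h (.inr (t, i)) y =
      (σ (h ++ [.inr (t, i)])).map (fun a ↦ .inl (succ t (i + f a))) y := by
  simp only [stepG', turn', tsum_mul_ite_eq_map_apply]
  rfl

theorem exists_eq_inl_of_stepG'_ne_zero (hsep : InteractionSeparated turn δ₁ δ₂ succ)
    (ht : turn t ≠ .prob) (hy : stepG' n turn δ₁ δ₂ succ f g σ π h (.inl t) y ≠ 0) :
    ∃ u, y = .inl u ∧ turn u = .prob := by
  cases turn_t : turn t with
  | p1 =>
    rw [stepG'_of_turn_eq_p1 turn_t] at hy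
    obtain ⟨a, -, rfl⟩ := (PMF.mem_support_map_iff _ _ _).1 hy
    exact ⟨_, rfl, hsep.turn_δ₁ t a turn_t⟩
  | p2 =>
    rw [stepG'_of_turn_eq_p2 turn_t] at hy
    obtain ⟨c, -, rfl⟩ := (PMF.mem_support_map_iff _ _ _).1 hy
    exact ⟨_, rfl, hsep.turn_δ₂ t c turn_t⟩
  | prob => exact absurd turn_t ht

theorem exists_eq_inr_of_stepG'_ne_zero (ht : turn t = .prob)
    (hy : stepG' n turn δ₁ δ₂ succ f g σ π h (.inl t) y ≠ 0) : ∃ i, y = .inr (t, i) := by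
  rw [stepG'_of_turn_eq_prob ht] at hy
  obtain ⟨c, -, rfl⟩ := (PMF.mem_support_map_iff _ _ _).1 hy
  exact ⟨_, rfl⟩

theorem exists_eq_inl_of_stepG'_inr_ne_zero (hsep : InteractionSeparated turn δ₁ δ₂ succ)
    (ht : turn t = .prob) (hy : stepG' n turn δ₁ δ₂ succ f g σ π h (.inr (t, i)) y ≠ 0) :
    ∃ u, y = .inl u ∧ turn u ≠ .prob := by
  rw [stepG'_inr] at hy
  obtain ⟨a, -, rfl⟩ := (PMF.mem_support_map_iff _ _ _).1 hy
  exact ⟨_, rfl, hsep.turn_succ t _ ht⟩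

end Derandomized

end Step

section Timing

variable {b : Bool} {k : ℕ}

/-- Whether the state at time `k` of a play of `G` is probabilistic; `b` says whether the initial
state is. -/
abbrev IsProbTime (b : Bool) (k : ℕ) : Prop := (k + b.toNat) % 2 = 1

/-- The position at which the state at time `k` of a play of `G` occurs in a play of `G'`. It
exceeds `k` by the number of probabilistic times before `k`. -/
def pos (b : Bool) (k : ℕ) : ℕ := k + (k + b.toNat) / 2

/-- The last time of the play of `G` whose position in the play of `G'` is at most `j`. Two
consecutive times of `G` take up three positions in `G'`. -/
def index (b : Bool) (j : ℕ) : ℕ := (2 * j + 1 - b.toNat) / 3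

theorem pos_zero : pos b 0 = 0 := by cases b <;> rfl

theorem pos_succ_of_isProbTime (hk : IsProbTime b k) : pos b (k + 1) = pos b k + 2 := by
  grind [pos, b.toNat_le]

theorem pos_succ_of_not_isProbTime (hk : ¬IsProbTime b k) : pos b (k + 1) = pos b k + 1 := by
  grind [pos, b.toNat_le]

theorem isProbTime_succ : IsProbTime b (k + 1) ↔ ¬IsProbTime b k := by grind

theorem pos_strictMono : StrictMono (pos b) :=
  strictMono_nat_of_lt_succ fun k ↦ by grind [pos]

theorem index_mono : Monotone (index b) := fun i j hij ↦ by grind [index]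

theorem index_pos : index b (pos b k) = k := by grind [index, pos, b.toNat_le]

theorem index_pos_succ (hk : IsProbTime b k) : index b (pos b k + 1) = k := by
  grind [index, pos, b.toNat_le]

theorem eq_pos_index_or (b : Bool) (j : ℕ) :
    j = pos b (index b j) ∨ IsProbTime b (index b j) ∧ j = pos b (index b j) + 1 := by
  grind [index, pos, b.toNat_le]

end Timing

section Interleaving

variable {n : ℕ} {turn : S → Turn} {b : Bool} {x : ℕ → S' S n} {ρ : ℕ → S} {φ : Set (ℕ → S)}

/-- The play of `G` obtained from a play of `G'` by keeping the states at the positions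
`pos b k`. -/
def collapse (b : Bool) (x : ℕ → S' S n) : ℕ → S := fun k ↦ unbar (x (pos b k))

/-- A sequence of states of `G'` which projects to `ρ` with the repetitions of an interleaved play.
It is not a play, since it stays in `S`; but it has the same observations as the plays of `G'` that
collapse to `ρ`. -/
def expand (n : ℕ) (b : Bool) (ρ : ℕ → S) : ℕ → S' S n := fun j ↦ .inl (ρ (index b j))

theorem collapse_expand : collapse b (expand n b ρ) = ρ := funext fun k ↦ by
  rw [collapse, expand, index_pos, unbar]

/-- The shape of the plays of `G'`: the states of `G` sit at the positions `pos b k`, every other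
one of them is probabilistic, and these are followed by a state in `S_P × ZMod n` over them. -/
structure IsInterleaving (turn : S → Turn) (b : Bool) (x : ℕ → S' S n) : Prop where
  apply_pos (k : ℕ) : x (pos b k) = .inl (collapse b x k)
  turn_eq_prob_iff (k : ℕ) : turn (collapse b x k) = .prob ↔ IsProbTime b k
  apply_pos_succ (k : ℕ) : IsProbTime b k → ∃ i, x (pos b k + 1) = .inr (collapse b x k, i)

namespace IsInterleaving

theorem unbar_apply (hx : IsInterleaving turn b x) (j : ℕ) :
    unbar (x j) = collapse b x (index b j) := by
  obtain hj | ⟨hprob, hj⟩ := eq_pos_index_or b j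
  · rw [collapse, ← hj]
  · obtain ⟨i, hi⟩ := hx.apply_pos_succ _ hprob
    rw [← hj] at hi
    rw [hi, unbar]

theorem isLeft_iff (hx : IsInterleaving turn b x) (j : ℕ) :
    (x j).isLeft = true ↔ j ∈ Set.range (pos b) := by
  constructor
  · intro hleft
    obtain hj | ⟨hprob, hj⟩ := eq_pos_index_or b j
    · exact ⟨_, hj.symm⟩
    · obtain ⟨i, hi⟩ := hx.apply_pos_succ _ hprob
      rw [← hj] at hi
      simp [hi] at hleft
  · rintro ⟨k, rfl⟩
    simp [hx.apply_pos k]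

theorem mem_phi'_iff (hx : IsInterleaving turn b x) : x ∈ phi' φ ↔ collapse b x ∈ φ := by
  have setOf_isLeft : {j | (x j).isLeft = true} = Set.range (pos b) :=
    Set.ext hx.isLeft_iff
  have infinite : {j | (x j).isLeft = true}.Infinite :=
    setOf_isLeft ▸ Set.infinite_range_of_injective pos_strictMono.injective
  have nth_isLeft : Nat.nth (fun j ↦ (x j).isLeft = true) = pos b :=
    StrictMono.range_inj (Nat.nth_strictMono infinite) pos_strictMono |>.1
      ((Nat.range_nth_of_infinite infinite).trans setOf_isLeft)
  simp only [phi', Set.mem_ofPred_eq, infinite, true_and, nth_isLeft]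
  rfl

theorem of_stepG'_ne_zero [DecidableEq S] [Fintype A₁] [Fintype A₂] [NeZero n]
    {δ₁ : S → A₁ → S} {δ₂ : S → A₂ → S} {succ : S → ZMod n → S} {f : A₁ → ZMod n}
    {g : A₂ → ZMod n} {σ : List (S' S n) → PMF A₁} {π : List (S' S n) → PMF A₂} {s : S}
    (hsep : InteractionSeparated turn δ₁ δ₂ succ) (hb : b = true ↔ turn s = .prob)
    (h0 : x 0 = .inl s)
    (hx : ∀ j, stepG' n turn δ₁ δ₂ succ f g σ π (history x j) (x j) (x (j + 1)) ≠ 0) :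
    IsInterleaving turn b x := by
  have inr_of_prob {k : ℕ} {u : S} (hu : x (pos b k) = .inl u) (turn_u : turn u = .prob) :
      ∃ i, x (pos b k + 1) = .inr (u, i) :=
    exists_eq_inr_of_stepG'_ne_zero turn_u (hu ▸ hx (pos b k))
  have main (k : ℕ) : ∃ u, x (pos b k) = .inl u ∧ (turn u = .prob ↔ IsProbTime b k) := by
    induction k with
    | zero => exact ⟨s, by rw [pos_zero, h0], by cases b <;> simpa [IsProbTime] using hb.symm⟩
    | succ k ih =>
      obtain ⟨u, hu, turn_u⟩ := ih
      by_cases hk : IsProbTime b k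
      · obtain ⟨i, hi⟩ := inr_of_prob hu (turn_u.2 hk)
        obtain ⟨v, hv, turn_v⟩ := exists_eq_inl_of_stepG'_inr_ne_zero hsep (turn_u.2 hk)
          (hi ▸ hx (pos b k + 1))
        exact ⟨v, pos_succ_of_isProbTime hk ▸ hv, by simp [turn_v, isProbTime_succ, hk]⟩
      · obtain ⟨v, hv, turn_v⟩ := exists_eq_inl_of_stepG'_ne_zero hsep (mt turn_u.1 hk)
          (hu ▸ hx (pos b k))
        exact ⟨v, pos_succ_of_not_isProbTime hk ▸ hv, by simp [turn_v, isProbTime_succ, hk]⟩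
  have apply_pos (k : ℕ) : x (pos b k) = .inl (collapse b x k) := by
    obtain ⟨u, hu, -⟩ := main k
    rw [collapse, hu, unbar]
  have turn_iff (k : ℕ) : turn (collapse b x k) = .prob ↔ IsProbTime b k := by
    obtain ⟨u, hu, turn_u⟩ := main k
    rwa [collapse, hu, unbar]
  exact ⟨apply_pos, turn_iff, fun k hk ↦ inr_of_prob (apply_pos k) ((turn_iff k).2 hk)⟩

end IsInterleaving

end Interleaving

section OneTimePad

theorem measure_eq_tsum_measure_inter {Ω β ι : Type*} [MeasurableSpace Ω] [MeasurableSpace β]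
    [MeasurableSingletonClass β] [Countable ι] {μ : Measure Ω} {E : Set Ω} {X : Ω → β}
    (hX : Measurable X) {v : ι → β} (hv : Function.Injective v)
    (hXv : ∀ᵐ x ∂μ, x ∈ E → ∃ i, X x = v i) : μ E = ∑' i, μ (E ∩ {x | X x = v i}) := by
  have fiber_meas (i : ι) : MeasurableSet {x | X x = v i} := hX (measurableSet_singleton (v i))
  have union_ae_eq : (E ∩ ⋃ i, {x | X x = v i} : Set Ω) =ᵐ[μ] E :=
    hXv.mono fun x hx ↦ propext ⟨And.left, fun hxE ↦ ⟨hxE, Set.mem_iUnion.2 (hx hxE)⟩⟩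
  rw [← measure_congr union_ae_eq, Set.inter_comm, ← Measure.restrict_apply (.iUnion fiber_meas),
    measure_iUnion _ fiber_meas]
  · simp only [Measure.restrict_apply (fiber_meas _), Set.inter_comm E]
  · exact fun i k hik ↦ Set.disjoint_left.2 fun x hi hk ↦ hik (hv (hi.symm.trans hk))

variable [Countable S] [DecidableEq S] [MeasurableSpace S] [MeasurableSingletonClass S]
  [Fintype A₁] [Fintype A₂] {n : ℕ} [NeZero n] {turn : S → Turn}
  {δ₁ : S → A₁ → S} {δ₂ : S → A₂ → S} {succ : S → ZMod n → S} {f : A₁ → ZMod n} {g : A₂ → ZMod n}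
  {σ : List (S' S n) → PMF A₁} {π : List (S' S n) → PMF A₂} {s : S' S n}
  {μ : Measure (ℕ → S' S n)}

theorem IsPlayLaw.measure_inter_eq_of_turn_eq_prob
    (hμ : IsPlayLaw (stepG' n turn δ₁ δ₂ succ f g σ π) s μ) {j : ℕ} {E : Set (ℕ → S' S n)}
    (hE : DependsOn (· ∈ E) (Set.Iio (j + 1))) {t : S} (ht : turn t = .prob)
    (hEt : ∀ᵐ x ∂μ, x ∈ E → x j = .inl t) {q : PMF A₁} {r : PMF A₂}
    (hr : IsMeanPMF μ E (fun x ↦ π (history x (j + 1))) r)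
    (hq : ∀ᵐ x ∂μ, x ∈ E → σ (history x (j + 2)) = q)
    (hpad : r.map g = PMF.uniformOfFintype _ ∨ q.map f = PMF.uniformOfFintype _) (u : S) :
    μ (E ∩ {x | x (j + 2) = .inl u}) = μ E * (PMF.uniformOfFintype (ZMod n)).map (succ t) u := by
  have inr_inj : Function.Injective fun i ↦ (.inr (t, i) : S' S n) :=
    Sum.inr_injective.comp (Prod.mk_right_injective t)
  set Ei : ZMod n → Set (ℕ → S' S n) := fun i ↦ E ∩ {x | x (j + 1) = .inr (t, i)} with Ei_def
  have hEi (i : ZMod n) : DependsOn (· ∈ Ei i) (Set.Iio (j + 2)) := fun y z h ↦ by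
    have hEyz : (y ∈ E) = (z ∈ E) := hE fun k hk ↦ h k (Nat.lt_succ_of_lt hk)
    simp only [Ei_def, Set.mem_inter_iff, Set.mem_ofPred_eq, hEyz, h (j + 1) (Nat.lt_succ_self _)]
  have measure_Ei (i : ZMod n) : μ (Ei i) = μ E * r.map g i := by
    rw [← pmf_map_comp_apply_of_injective r g inr_inj]
    exact hμ.measure_inter_eq_mul_map hE hr (hEt.mono fun x hx hxE y ↦ by
      rw [hx hxE, stepG'_of_turn_eq_prob ht, history_succ, hx hxE]; rfl) _
  have measure_Ei_inter (i : ZMod n) : μ (Ei i ∩ {x | x (j + 2) = .inl u}) =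
      μ (Ei i) * q.map (fun a ↦ succ t (i + f a)) u := by
    rw [← pmf_map_comp_apply_of_injective q _ Sum.inl_injective]
    refine hμ.measure_inter_eq_mul_map (hEi i) (κ := σ) (.of_ae_eq
      (measurableSet_of_dependsOn (hEi i)) (hq.mono fun x hx hxE ↦ hx hxE.1)) (.of_forall ?_) _
    rintro x ⟨-, hx : x (j + 1) = _⟩ y
    rw [hx, stepG'_inr, history_succ (m := j + 1), hx]
    rfl
  have exists_inr : ∀ᵐ x ∂μ, x ∈ E ∩ {x | x (j + 2) = .inl u} →
      ∃ i, x (j + 1) = (.inr (t, i) : S' S n) := by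
    filter_upwards [hEt, hμ.ae_step_ne_zero] with x hx hstep hxE
    exact exists_eq_inr_of_stepG'_ne_zero ht (hx hxE.1 ▸ hstep j)
  rw [measure_eq_tsum_measure_inter (measurable_pi_apply (j + 1)) inr_inj exists_inr]
  calc ∑' i, μ (E ∩ {x | x (j + 2) = .inl u} ∩ {x | x (j + 1) = .inr (t, i)})
      = ∑' i, μ E * (r.map g i * q.map (fun a ↦ succ t (i + f a)) u) := by
        refine tsum_congr fun i ↦ ?_
        rw [Set.inter_right_comm, ← mul_assoc, ← measure_Ei]
        exact measure_Ei_inter i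
    _ = μ E * (PMF.uniformOfFintype (ZMod n)).map (succ t) u := by
        rw [ENNReal.tsum_mul_left, tsum_mul_map_add_eq_map_uniform hpad]

end OneTimePad

section Transfer

section Fiber

variable {n : ℕ} {b : Bool} {turn : S → Turn} {x : ℕ → S' S n} {ρ : ℕ → S} {m j : ℕ}

/-- The plays of `G'` whose collapse agrees with `ρ` before time `m`. -/
def fiber (n : ℕ) (b : Bool) (ρ : ℕ → S) (m : ℕ) : Set (ℕ → S' S n) :=
  collapse b ⁻¹' PiNat.cylinder ρ m

theorem dependsOn_mem_fiber :
    DependsOn (· ∈ fiber n b ρ (m + 1)) (Set.Iio (pos b m + 1)) := fun _ _ h ↦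
  dependsOn_mem_cylinder ρ (m + 1) fun _ hi ↦ congrArg unbar <|
    h _ (Nat.lt_succ_of_le (pos_strictMono.monotone (Nat.le_of_lt_succ hi)))

theorem fiber_congr {ρ' : ℕ → S} (h : ∀ i < m, ρ i = ρ' i) : fiber n b ρ m = fiber n b ρ' m :=
  congrArg (collapse b ⁻¹' ·) (PiNat.mem_cylinder_iff_eq.1 h)

theorem measurable_collapse [Countable S] [MeasurableSpace S] [MeasurableSingletonClass S]
    [NeZero n] : Measurable (collapse b : (ℕ → S' S n) → ℕ → S) :=
  measurable_pi_lambda _ fun k ↦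
    (measurable_of_countable (unbar : S' S n → S)).comp (measurable_pi_apply (pos b k))

theorem IsInterleaving.mem_fiber_succ_iff (hx : IsInterleaving turn b x) :
    x ∈ fiber n b ρ (m + 1) ↔ x ∈ fiber n b ρ m ∩ {x | x (pos b m) = .inl (ρ m)} := by
  simp only [fiber, Set.mem_inter_iff, Set.mem_preimage, PiNat.mem_cylinder_iff, Set.mem_ofPred_eq,
    hx.apply_pos, Sum.inl.injEq, Nat.lt_succ_iff_lt_or_eq, or_imp, forall_and, forall_eq]

theorem IsInterleaving.apply_pos_of_mem_fiber (hx : IsInterleaving turn b x)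
    (hρ : x ∈ fiber n b ρ (m + 1)) : x (pos b m) = .inl (ρ m) :=
  (hx.mem_fiber_succ_iff.1 hρ).2

theorem IsInterleaving.obsBased_history_eq {A O : Type} {obs : S → O}
    {σ : List (S' S n) → PMF A} (hσ : ObsBased (obs' obs) σ) (hx : IsInterleaving turn b x)
    (hρ : x ∈ fiber n b ρ (m + 1)) (hj : index b j ≤ m) :
    σ (history x (j + 1)) = σ (history (expand n b ρ) (j + 1)) := by
  refine hσ _ _ ?_
  rw [map_history, map_history]
  refine history_congr fun i hi ↦ congrArg obs ?_
  rw [hx.unbar_apply, expand, unbar]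
  exact hρ _ (Nat.lt_succ_of_le ((index_mono (Nat.le_of_lt_succ hi)).trans hj))

end Fiber

variable {n : ℕ} [NeZero n] {b : Bool} {f : A₁ → ZMod n} {g : A₂ → ZMod n} {σ : List S → PMF A₁}
  {π : List S → PMF A₂} {σ' : List (S' S n) → PMF A₁} {π' : List (S' S n) → PMF A₂}

/-- The strategies `σ'` and `π'` simulate `σ` and `π` when `G'` is played with law `μ`: on average
over the plays with a given collapse, the actions at the states of `G` are the same, and in each
gadget at least one of the two players uses a uniform pad. -/
structure Simulates [MeasurableSpace S] (b : Bool) (f : A₁ → ZMod n) (g : A₂ → ZMod n)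
    (μ : Measure (ℕ → S' S n)) (σ' : List (S' S n) → PMF A₁) (π' : List (S' S n) → PMF A₂)
    (σ : List S → PMF A₁) (π : List S → PMF A₂) : Prop where
  strategy₁_eq (ρ : ℕ → S) (m : ℕ) : ¬IsProbTime b m →
    σ' (history (expand n b ρ) (pos b m + 1)) = σ (history ρ (m + 1))
  isMeanPMF (ρ : ℕ → S) (m : ℕ) : ¬IsProbTime b m →
    IsMeanPMF μ (fiber n b ρ (m + 1)) (fun x ↦ π' (history x (pos b m + 1))) (π (history ρ (m + 1)))
  exists_pad (ρ : ℕ → S) (m : ℕ) : IsProbTime b m →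
    ∃ r, IsMeanPMF μ (fiber n b ρ (m + 1)) (fun x ↦ π' (history x (pos b m + 1))) r ∧
      (r.map g = PMF.uniformOfFintype _ ∨
        (σ' (history (expand n b ρ) (pos b m + 2))).map f = PMF.uniformOfFintype _)

variable [Countable S] [DecidableEq S] [MeasurableSpace S] [MeasurableSingletonClass S]
  [Fintype A₁] [Fintype A₂] {turn : S → Turn} {δ₁ : S → A₁ → S} {δ₂ : S → A₂ → S}
  {succ : S → ZMod n → S} {s : S} {μ : Measure (ℕ → S' S n)}

theorem IsPlayLaw.ae_isInterleaving
    (hμ : IsPlayLaw (stepG' n turn δ₁ δ₂ succ f g σ' π') (.inl s) μ)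
    (hsep : InteractionSeparated turn δ₁ δ₂ succ) (hb : b = true ↔ turn s = .prob) :
    ∀ᵐ x ∂μ, IsInterleaving turn b x := by
  filter_upwards [hμ.ae_zero, hμ.ae_step_ne_zero] with x h0 hstep
  exact .of_stepG'_ne_zero hsep hb h0 hstep

namespace Simulates

variable {O : Type} {obs : S → O}

theorem measure_fiber_inter_of_not_isProbTime (h : Simulates b f g μ σ' π' σ π)
    (hμ : IsPlayLaw (stepG' n turn δ₁ δ₂ succ f g σ' π') (.inl s) μ)
    (hx : ∀ᵐ x ∂μ, IsInterleaving turn b x) (hσ' : ObsBased (obs' obs) σ') {ρ : ℕ → S} {m : ℕ}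
    (hm : ¬IsProbTime b m) (hρ : turn (ρ m) ≠ .prob) (u : S) :
    μ (fiber n b ρ (m + 1) ∩ {x | x (pos b (m + 1)) = .inl u}) =
      μ (fiber n b ρ (m + 1)) * stepG n turn δ₁ δ₂ succ σ π (history ρ m) (ρ m) u := by
  rw [pos_succ_of_not_isProbTime hm]
  cases turn_ρ : turn (ρ m) with
  | p1 =>
    rw [stepG_of_turn_eq_p1 turn_ρ, ← history_succ,
      ← pmf_map_comp_apply_of_injective _ _ Sum.inl_injective]
    refine hμ.measure_inter_eq_mul_map dependsOn_mem_fiber (κ := σ')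
      (.of_ae_eq (measurableSet_of_dependsOn dependsOn_mem_fiber) ?_) ?_ _
    · filter_upwards [hx] with x hx hxρ
      rw [hx.obsBased_history_eq hσ' hxρ index_pos.le, h.strategy₁_eq ρ m hm]
    · filter_upwards [hx] with x hx hxρ y
      rw [hx.apply_pos_of_mem_fiber hxρ, stepG'_of_turn_eq_p1 turn_ρ, history_succ,
        hx.apply_pos_of_mem_fiber hxρ]
  | p2 =>
    rw [stepG_of_turn_eq_p2 turn_ρ, ← history_succ,
      ← pmf_map_comp_apply_of_injective _ _ Sum.inl_injective]
    refine hμ.measure_inter_eq_mul_map dependsOn_mem_fiber (h.isMeanPMF ρ m hm) ?_ _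
    filter_upwards [hx] with x hx hxρ y
    rw [hx.apply_pos_of_mem_fiber hxρ, stepG'_of_turn_eq_p2 turn_ρ, history_succ,
      hx.apply_pos_of_mem_fiber hxρ]
  | prob => exact absurd turn_ρ hρ

theorem measure_fiber_inter_of_isProbTime (h : Simulates b f g μ σ' π' σ π)
    (hμ : IsPlayLaw (stepG' n turn δ₁ δ₂ succ f g σ' π') (.inl s) μ)
    (hx : ∀ᵐ x ∂μ, IsInterleaving turn b x) (hσ' : ObsBased (obs' obs) σ') {ρ : ℕ → S} {m : ℕ}
    (hm : IsProbTime b m) (hρ : turn (ρ m) = .prob) (u : S) :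
    μ (fiber n b ρ (m + 1) ∩ {x | x (pos b (m + 1)) = .inl u}) =
      μ (fiber n b ρ (m + 1)) * stepG n turn δ₁ δ₂ succ σ π (history ρ m) (ρ m) u := by
  obtain ⟨r, hr, hpad⟩ := h.exists_pad ρ m hm
  rw [stepG_of_turn_eq_prob hρ, pos_succ_of_isProbTime hm]
  exact hμ.measure_inter_eq_of_turn_eq_prob dependsOn_mem_fiber hρ
    (hx.mono fun x hx hxρ ↦ hx.apply_pos_of_mem_fiber hxρ) hr
    (hx.mono fun x hx hxρ ↦ hx.obsBased_history_eq hσ' hxρ (index_pos_succ hm).le) hpad u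

theorem measure_fiber_inter (h : Simulates b f g μ σ' π' σ π)
    (hμ : IsPlayLaw (stepG' n turn δ₁ δ₂ succ f g σ' π') (.inl s) μ)
    (hx : ∀ᵐ x ∂μ, IsInterleaving turn b x) (hσ' : ObsBased (obs' obs) σ') (ρ : ℕ → S) (m : ℕ)
    (u : S) :
    μ (fiber n b ρ (m + 1) ∩ {x | x (pos b (m + 1)) = .inl u}) =
      μ (fiber n b ρ (m + 1)) * stepG n turn δ₁ δ₂ succ σ π (history ρ m) (ρ m) u := by
  by_cases null : μ (fiber n b ρ (m + 1)) = 0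
  · rw [null, zero_mul, measure_mono_null Set.inter_subset_left null]
  · obtain ⟨x, hxρ, hx₀⟩ := ((frequently_ae_mem_iff.2 null).and_eventually hx).exists
    have turn_iff : turn (ρ m) = .prob ↔ IsProbTime b m :=
      hxρ m m.lt_succ_self ▸ hx₀.turn_eq_prob_iff m
    by_cases hm : IsProbTime b m
    · exact h.measure_fiber_inter_of_isProbTime hμ hx hσ' hm (turn_iff.2 hm) u
    · exact h.measure_fiber_inter_of_not_isProbTime hμ hx hσ' hm (mt turn_iff.1 hm) u

theorem isPlayLaw_map_collapse (h : Simulates b f g μ σ' π' σ π)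
    (hμ : IsPlayLaw (stepG' n turn δ₁ δ₂ succ f g σ' π') (.inl s) μ)
    (hx : ∀ᵐ x ∂μ, IsInterleaving turn b x) (hσ' : ObsBased (obs' obs) σ') :
    IsPlayLaw (stepG n turn δ₁ δ₂ succ σ π) s (μ.map (collapse b)) where
  isProbabilityMeasure :=
    have := hμ.isProbabilityMeasure
    Measure.isProbabilityMeasure_map measurable_collapse.aemeasurable
  ae_zero := by
    refine (ae_map_iff measurable_collapse.aemeasurable
      (measurable_pi_apply 0 (measurableSet_singleton s))).2 (hμ.ae_zero.mono fun x h0 ↦ ?_)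
    simp only [collapse, pos_zero, h0, unbar, Set.mem_singleton_iff]
  cylinder_succ ρ m := by
    have map_cylinder (k : ℕ) :
        μ.map (collapse b) (PiNat.cylinder ρ k) = μ (fiber n b ρ k) :=
      Measure.map_apply measurable_collapse
        (measurableSet_of_dependsOn (dependsOn_mem_cylinder ρ k))
    have fiber_succ_ae_eq : fiber n b ρ (m + 2) =ᵐ[μ]
        (fiber n b ρ (m + 1) ∩ {x | x (pos b (m + 1)) = .inl (ρ (m + 1))} : Set _) :=
      hx.mono fun x hx ↦ propext hx.mem_fiber_succ_iff
    rw [map_cylinder, map_cylinder, measure_congr fiber_succ_ae_eq,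
      h.measure_fiber_inter hμ hx hσ']

theorem measure_phi'_eq (h : Simulates b f g μ σ' π' σ π)
    (hμ : IsPlayLaw (stepG' n turn δ₁ δ₂ succ f g σ' π') (.inl s) μ)
    (hx : ∀ᵐ x ∂μ, IsInterleaving turn b x) (hσ' : ObsBased (obs' obs) σ') {ν : Measure (ℕ → S)}
    (hν : IsPlayLaw (stepG n turn δ₁ δ₂ succ σ π) s ν) {φ : Set (ℕ → S)}
    (hφ : MeasurableSet φ) : μ (phi' φ) = ν φ := by
  have phi'_ae_eq : phi' φ =ᵐ[μ] collapse b ⁻¹' φ :=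
    hx.mono fun x hx ↦ propext hx.mem_phi'_iff
  rw [measure_congr phi'_ae_eq, ← Measure.map_apply measurable_collapse hφ,
    (h.isPlayLaw_map_collapse hμ hx hσ').unique hν]

end Simulates

end Transfer

section Strategy

variable {A O : Type} {n : ℕ} {b : Bool} {obs : S → O} {m j : ℕ}

theorem apply_getD_eq_of_map_eq {α β : Type*} {F : α → β} {h h' : List α}
    (hh : h.map F = h'.map F) (i : ℕ) (d : α) : F (h.getD i d) = F (h'.getD i d) := by
  simpa only [List.getD_map] using congrArg (·.getD i (F d)) hh

/-- The strategy in `G'` which plays `κ` on the collapsed history, and `p` at the probabilistic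
states and in the gadgets. The value of `d` is immaterial on nonempty histories. -/
def liftStrategy (b : Bool) (d : S' S n) (p : PMF A) (κ : List S → PMF A) (h : List (S' S n)) :
    PMF A :=
  if IsProbTime b (index b (h.length - 1)) then p
  else κ (history (collapse b (h.getD · d)) (index b (h.length - 1) + 1))

/-- The strategy in `G` which plays `κ` on the expanded history. The value of `d` is immaterial on
nonempty histories. -/
def restrictStrategy (b : Bool) (d : S) (κ : List (S' S n) → PMF A) (h : List S) : PMF A :=
  κ (history (expand n b (h.getD · d)) (pos b (h.length - 1) + 1))

theorem ObsBased.liftStrategy {κ : List S → PMF A} (hκ : ObsBased obs κ) (d : S' S n)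
    (p : PMF A) : ObsBased (obs' obs) (liftStrategy b d p κ) := fun h h' hh ↦ by
  have length_eq : h.length = h'.length := by simpa using congrArg List.length hh
  rw [Stmt5.liftStrategy, Stmt5.liftStrategy, length_eq]
  refine if_congr .rfl rfl (hκ _ _ ?_)
  rw [map_history, map_history]
  exact history_congr fun i _ ↦ apply_getD_eq_of_map_eq hh (pos b i) d

theorem ObsBased.restrictStrategy {κ : List (S' S n) → PMF A} (hκ : ObsBased (obs' obs) κ)
    (d : S) : ObsBased obs (restrictStrategy b d κ) := fun h h' hh ↦ by
  have length_eq : h.length = h'.length := by simpa using congrArg List.length hh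
  refine hκ _ _ ?_
  rw [map_history, map_history, length_eq]
  exact history_congr fun i _ ↦ apply_getD_eq_of_map_eq hh (index b i) d

variable {d : S' S n} {p : PMF A} {κ : List S → PMF A} {x : ℕ → S' S n}

theorem liftStrategy_history_of_isProbTime (hj : IsProbTime b (index b j)) :
    liftStrategy b d p κ (history x (j + 1)) = p := by
  rw [liftStrategy, length_history, Nat.add_sub_cancel, if_pos hj]

theorem liftStrategy_history_pos (hm : ¬IsProbTime b m) :
    liftStrategy b d p κ (history x (pos b m + 1)) = κ (history (collapse b x) (m + 1)) := by
  rw [liftStrategy, length_history, Nat.add_sub_cancel, index_pos, if_neg hm]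
  refine congrArg κ (history_congr fun i hi ↦ congrArg unbar (getD_history d ?_))
  exact Nat.lt_succ_of_le (pos_strictMono.monotone (Nat.le_of_lt_succ hi))

theorem restrictStrategy_history {κ : List (S' S n) → PMF A} {d : S} {ρ : ℕ → S} :
    restrictStrategy b d κ (history ρ (m + 1)) = κ (history (expand n b ρ) (pos b m + 1)) := by
  rw [restrictStrategy, length_history, Nat.add_sub_cancel]
  refine congrArg κ (history_congr fun i hi ↦ congrArg Sum.inl (getD_history d ?_))
  exact Nat.lt_succ_of_le ((index_mono (Nat.le_of_lt_succ hi)).trans index_pos.le)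

end Strategy

section Simulation

variable [Countable S] [MeasurableSpace S] [MeasurableSingletonClass S] {n : ℕ} [NeZero n]
  {f : A₁ → ZMod n} {g : A₂ → ZMod n} {b : Bool} {μ : Measure (ℕ → S' S n)}

theorem exists_simulates_liftStrategy [Countable A₂] [IsFiniteMeasure μ] {p : PMF A₁}
    (hp : p.map f = PMF.uniformOfFintype _) (d : S) (σ : List S → PMF A₁)
    (π' : List (S' S n) → PMF A₂) :
    ∃ π, Simulates b f g μ (liftStrategy b (.inl d) p σ) π' σ π := by
  have : Nonempty (ℕ → S' S n) := ⟨fun _ ↦ .inl d⟩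
  have π'_meas (k : ℕ) (c : A₂) : Measurable fun x : ℕ → S' S n ↦ π' (history x k) c :=
    measurable_of_dependsOn (Set.finite_Iio k) (dependsOn_history (π' · c) k)
  choose π hπ using fun h : List S ↦ exists_isMeanPMF (μ := μ) (π'_meas (pos b (h.length - 1) + 1))
    (fiber n b (h.getD · d) h.length)
  have isMeanPMF (ρ : ℕ → S) (m : ℕ) : IsMeanPMF μ (fiber n b ρ (m + 1))
      (fun x ↦ π' (history x (pos b m + 1))) (π (history ρ (m + 1))) := by
    have := hπ (history ρ (m + 1))
    rwa [length_history, Nat.add_sub_cancel, fiber_congr fun i hi ↦ getD_history d hi] at this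
  refine ⟨π, fun ρ m hm ↦ ?_, fun ρ m _ ↦ isMeanPMF ρ m, fun ρ m hm ↦ ⟨_, isMeanPMF ρ m, .inr ?_⟩⟩
  · rw [liftStrategy_history_pos hm, collapse_expand]
  · rwa [liftStrategy_history_of_isProbTime ((index_pos_succ hm).symm ▸ hm)]

theorem simulates_restrictStrategy {p : PMF A₂} (hp : p.map g = PMF.uniformOfFintype _) (d : S)
    (σ' : List (S' S n) → PMF A₁) (π : List S → PMF A₂) :
    Simulates b f g μ σ' (liftStrategy b (.inl d) p π) (restrictStrategy b d σ') π where
  strategy₁_eq _ _ _ := restrictStrategy_history.symm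
  isMeanPMF ρ m hm := .of_ae_eq (measurableSet_of_dependsOn dependsOn_mem_fiber) <|
    .of_forall fun x hx ↦ by rw [liftStrategy_history_pos hm, history_congr hx]
  exists_pad ρ m hm := ⟨p, .of_ae_eq (measurableSet_of_dependsOn dependsOn_mem_fiber) <|
    .of_forall fun x _ ↦ liftStrategy_history_of_isProbTime (index_pos.symm ▸ hm), .inl hp⟩

end Simulation

theorem iSup_eq_iSup_and_exists_eq_iSup_iff {ι κ α : Type*} [CompleteLattice α] {F : ι → α}
    {G : κ → α} (hFG : ∀ i, ∃ k, F i ≤ G k) (hGF : ∀ k, ∃ i, G k ≤ F i) :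
    iSup F = iSup G ∧ ((∃ i, F i = iSup F) ↔ ∃ k, G k = iSup G) := by
  have iSup_eq : iSup F = iSup G := (iSup_mono' hFG).antisymm (iSup_mono' hGF)
  refine ⟨iSup_eq, fun ⟨i, hi⟩ ↦ ?_, fun ⟨k, hk⟩ ↦ ?_⟩
  · obtain ⟨k, hk⟩ := hFG i
    exact ⟨k, (le_iSup G k).antisymm (iSup_eq ▸ hi ▸ hk)⟩
  · obtain ⟨i, hi⟩ := hGF k
    exact ⟨i, (le_iSup F i).antisymm (iSup_eq ▸ hk ▸ hi)⟩

theorem stmt_5_general {S A₁ A₂ O : Type} [Countable S] [DecidableEq S] [Fintype A₁] [Fintype A₂]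
    [MeasurableSpace S] [MeasurableSingletonClass S] {n : ℕ} [NeZero n] {turn : S → Turn}
    {δ₁ : S → A₁ → S} {δ₂ : S → A₂ → S} {succ : S → ZMod n → S} (obs₁ : S → O)
    (hsep : InteractionSeparated turn δ₁ δ₂ succ) {f : A₁ → ZMod n} {g : A₂ → ZMod n}
    (hf : Function.Surjective f) (hg : Function.Surjective g)
    {φ : Set (ℕ → S)} (hφ : MeasurableSet φ)
    {Pr : S → (List S → PMF A₁) → (List S → PMF A₂) → Measure (ℕ → S)}
    (hPr : IsPlayMeasure (stepG n turn δ₁ δ₂ succ) Pr)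
    {Pr' : S' S n → (List (S' S n) → PMF A₁) → (List (S' S n) → PMF A₂) → Measure (ℕ → S' S n)}
    (hPr' : IsPlayMeasure (stepG' n turn δ₁ δ₂ succ f g) Pr') (s : S) :
    (⨆ σ : {σ : List S → PMF A₁ // ObsBased obs₁ σ}, ⨅ π : List S → PMF A₂, Pr s σ.1 π φ) =
      (⨆ σ : {σ : List (S' S n) → PMF A₁ // ObsBased (obs' obs₁) σ},
        ⨅ π : List (S' S n) → PMF A₂, Pr' (Sum.inl s) σ.1 π (phi' φ)) ∧
    ((∃ σ : List S → PMF A₁, ObsBased obs₁ σ ∧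
        (⨅ π : List S → PMF A₂, Pr s σ π φ) =
          ⨆ σ' : {σ' : List S → PMF A₁ // ObsBased obs₁ σ'},
            ⨅ π : List S → PMF A₂, Pr s σ'.1 π φ) ↔
      (∃ σ : List (S' S n) → PMF A₁, ObsBased (obs' obs₁) σ ∧
        (⨅ π : List (S' S n) → PMF A₂, Pr' (Sum.inl s) σ π (phi' φ)) =
          ⨆ σ' : {σ' : List (S' S n) → PMF A₁ // ObsBased (obs' obs₁) σ'},
            ⨅ π : List (S' S n) → PMF A₂, Pr' (Sum.inl s) σ'.1 π (phi' φ))) := by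
  obtain ⟨b, hb⟩ : ∃ b : Bool, b = true ↔ turn s = .prob := ⟨_, decide_eq_true_iff⟩
  have phi'_eq {σ π σ' π'} (hσ' : ObsBased (obs' obs₁) σ')
      (h : Simulates b f g (Pr' (.inl s) σ' π') σ' π' σ π) :
      Pr' (.inl s) σ' π' (phi' φ) = Pr s σ π φ :=
    have hμ := hPr'.isPlayLaw (.inl s) σ' π'
    h.measure_phi'_eq hμ (hμ.ae_isInterleaving hsep hb) hσ' (hPr.isPlayLaw s σ π) hφ
  obtain ⟨p, hp⟩ := exists_pmf_map_eq_uniform hf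
  obtain ⟨q, hq⟩ := exists_pmf_map_eq_uniform hg
  simpa only [Subtype.exists, exists_prop] using iSup_eq_iSup_and_exists_eq_iSup_iff
    (F := fun σ : {σ // ObsBased obs₁ σ} ↦ ⨅ π, Pr s σ.1 π φ)
    (G := fun σ' : {σ' // ObsBased (obs' obs₁) σ'} ↦ ⨅ π', Pr' (.inl s) σ'.1 π' (phi' φ))
    (fun ⟨σ, hσ⟩ ↦ ⟨⟨_, hσ.liftStrategy (b := b) (.inl s) p⟩, iInf_mono' fun π' ↦
      have := hPr'.1 (.inl s) (liftStrategy b (.inl s) p σ) π'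
      (exists_simulates_liftStrategy hp s σ π').imp fun _ h ↦
        (phi'_eq (hσ.liftStrategy (.inl s) p) h).ge⟩)
    (fun ⟨σ', hσ'⟩ ↦ ⟨⟨_, hσ'.restrictStrategy (b := b) s⟩, iInf_mono' fun π ↦
      ⟨_, (phi'_eq hσ' (simulates_restrictStrategy hq s σ' π)).le⟩⟩)

theorem stmt_5 {S A₁ A₂ O : Type} [Fintype S] [Nonempty S] [DecidableEq S]
    [Fintype A₁] [Nonempty A₁] [Fintype A₂] [Nonempty A₂] [Fintype O]
    [MeasurableSpace S] [DiscreteMeasurableSpace S]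
    (n : ℕ) [NeZero n]
    (turn : S → Turn) (δ₁ : S → A₁ → S) (δ₂ : S → A₂ → S) (succ : S → ZMod n → S)
    (obs₁ : S → O)
    -- interaction separation: deterministic moves lead to probabilistic states and
    -- probabilistic states lead to player states
    (hδ₁ : ∀ s a, turn s = Turn.p1 → turn (δ₁ s a) = Turn.prob)
    (hδ₂ : ∀ s b, turn s = Turn.p2 → turn (δ₂ s b) = Turn.prob)
    (hsucc : ∀ s k, turn s = Turn.prob → turn (succ s k) ≠ Turn.prob)
    (f : A₁ → ZMod n) (g : A₂ → ZMod n)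
    (hf : Function.Surjective f) (hg : Function.Surjective g)
    (φ : Set (ℕ → S)) (hφ : MeasurableSet φ)
    (Pr : S → (List S → PMF A₁) → (List S → PMF A₂) → Measure (ℕ → S))
    (hPr : IsPlayMeasure (stepG n turn δ₁ δ₂ succ) Pr)
    (Pr' : S' S n → (List (S' S n) → PMF A₁) → (List (S' S n) → PMF A₂) →
      Measure (ℕ → S' S n))
    (hPr' : IsPlayMeasure (stepG' n turn δ₁ δ₂ succ f g) Pr')
    (s : S) :
    (⨆ σ : {σ : List S → PMF A₁ // ObsBased obs₁ σ},
        ⨅ π : List S → PMF A₂, Pr s σ.1 π φ) =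
      (⨆ σ : {σ : List (S' S n) → PMF A₁ // ObsBased (obs' obs₁) σ},
        ⨅ π : List (S' S n) → PMF A₂, Pr' (Sum.inl s) σ.1 π (phi' φ)) ∧
    ((∃ σ : List S → PMF A₁, ObsBased obs₁ σ ∧
        (⨅ π : List S → PMF A₂, Pr s σ π φ) =
          ⨆ σ' : {σ' : List S → PMF A₁ // ObsBased obs₁ σ'},
            ⨅ π : List S → PMF A₂, Pr s σ'.1 π φ) ↔
      (∃ σ : List (S' S n) → PMF A₁, ObsBased (obs' obs₁) σ ∧
        (⨅ π : List (S' S n) → PMF A₂, Pr' (Sum.inl s) σ π (phi' φ)) =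
          ⨆ σ' : {σ' : List (S' S n) → PMF A₁ // ObsBased (obs' obs₁) σ'},
            ⨅ π : List (S' S n) → PMF A₂, Pr' (Sum.inl s) σ'.1 π (phi' φ))) := by
  exact stmt_5_general obs₁ ⟨hδ₁, hδ₂, hsucc⟩ hf hg hφ hPr hPr' s

end Stmt5
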